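/- arXiv:2011.12259 — 2 statements merged into one kernel-verified Lean document; each statement's English description precedes it below -/
import Mathlib

section
/- Let (G, sat) be an instance with cardinal preferences (ties allowed), let M' be an ordinally stable fractional matching of (G, sat) under which every matched agent is fully matched, and let M be an arbitrary fractional matching of (G, sat) (in particular, any cardinally stable or ordinally stable one). Then #fully(M) ≤ 2 · #fully(M'). -/
/-!
An edge does not block `M'` only if one of its endpoints has used up its whole capacity, so the
set `F` of agents fully matched under an ordinally stable `M'` is a vertex cover. An agent outside
`F` that is fully matched under `M` therefore sends its whole unit of `M`-weight into `F`, and each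
agent of `F` absorbs at most one unit. So at most `#F` agents fully matched under `M` lie outside
`F`, and at most `#F` lie inside.
-/

open Finset
open scoped Classical

variable {V : Type*}

/-- Two agents find each other acceptable iff at least one of them assigns
positive satisfaction to the other. -/
def Adj (sat : V → V → ℚ) (u v : V) : Prop :=
  0 < sat u v ∨ 0 < sat v u

instance (sat : V → V → ℚ) (u v : V) : Decidable (Adj sat u v) :=
  inferInstanceAs (Decidable (0 < sat u v ∨ 0 < sat v u))

/-- `sat` describes a valid instance: satisfactions are nonnegative, an agent has
zero satisfaction towards itself, and the acceptability graph has no isolated vertices. -/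
structure IsInstance [Fintype V] (sat : V → V → ℚ) : Prop where
  nonneg : ∀ u v, 0 ≤ sat u v
  sat_self : ∀ u, sat u u = 0
  noIsolated : ∀ v, ∃ u, Adj sat v u

/-- `M` is a fractional matching of the acceptability graph of `sat`. -/
structure IsMatching [Fintype V] (sat : V → V → ℚ) (M : V → V → ℝ) : Prop where
  symm : ∀ u v, M u v = M v u
  nonneg : ∀ u v, 0 ≤ M u v
  support : ∀ u v, ¬ Adj sat u v → M u v = 0
  degree_le_one : ∀ v, ∑ u, M v u ≤ 1

/-- `M(x, ≽ y)`: total matching value of `x` with neighbours liked at least as much as `y`. -/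
noncomputable def wge [Fintype V] (sat : V → V → ℚ) (M : V → V → ℝ) (x y : V) : ℝ :=
  ∑ z ∈ Finset.univ.filter (fun z => Adj sat x z ∧ sat x y ≤ sat x z), M x z

/-- `M(x, ≻ y)`: total matching value of `x` with neighbours strictly preferred to `y`. -/
noncomputable def wgt [Fintype V] (sat : V → V → ℚ) (M : V → V → ℝ) (x y : V) : ℝ :=
  ∑ z ∈ Finset.univ.filter (fun z => Adj sat x z ∧ sat x y < sat x z), M x z

/-- Utility of agent `v` under matching `M`. -/
noncomputable def util [Fintype V] (sat : V → V → ℚ) (M : V → V → ℝ) (v : V) : ℝ :=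
  ∑ u, (sat v u : ℝ) * M v u

/-- Social welfare of a matching. -/
noncomputable def welfare [Fintype V] (sat : V → V → ℚ) (M : V → V → ℝ) : ℝ :=
  ∑ v, util sat M v

/-- Ordinal stability: no edge is ordinally blocking. -/
def OrdStable [Fintype V] (sat : V → V → ℚ) (M : V → V → ℝ) : Prop :=
  ∀ u v, Adj sat u v → ¬ (wge sat M u v < 1 ∧ wge sat M v u < 1)

/-- Cardinal stability: no edge is cardinally blocking. -/
def CardStable [Fintype V] (sat : V → V → ℚ) (M : V → V → ℝ) : Prop :=
  ∀ u v, Adj sat u v → ¬ (util sat M u < (sat u v : ℝ) ∧ util sat M v < (sat v u : ℝ))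

/-- Linear stability: no edge is linearly blocking. -/
def LinStable [Fintype V] (sat : V → V → ℚ) (M : V → V → ℝ) : Prop :=
  ∀ u v, Adj sat u v → ¬ (wge sat M u v + wge sat M v u - M u v < 1)

/-- Strict preferences: no ties among distinct neighbours. -/
def StrictPrefs (sat : V → V → ℚ) : Prop :=
  ∀ v x y, Adj sat v x → Adj sat v y → x ≠ y → sat v x ≠ sat v y

/-- The acceptability graph is bipartite with parts `U` and its complement. -/
def BipartiteWith (sat : V → V → ℚ) (U : Set V) : Prop :=
  ∀ u v, Adj sat u v → (u ∈ U ↔ v ∉ U)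

/-- Integral matching. -/
def IntegralMatching (M : V → V → ℝ) : Prop := ∀ u v, M u v = 0 ∨ M u v = 1

/-- Number of fully matched agents. -/
noncomputable def nfully [Fintype V] (M : V → V → ℝ) : ℕ :=
  (Finset.univ.filter (fun v => ∑ u, M v u = (1 : ℝ))).card

lemma card_le_card_of_le_sum_of_sum_le {α β R : Type*} [AddCommMonoid R] [PartialOrder R]
    [IsOrderedCancelAddMonoid R] {s : Finset α} {t : Finset β} {w : α → β → R} {c : R}
    (hc : 0 < c) (hs : ∀ a ∈ s, c ≤ ∑ b ∈ t, w a b) (ht : ∀ b ∈ t, ∑ a ∈ s, w a b ≤ c) :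
    #s ≤ #t := by
  refine (nsmul_left_strictMono hc).le_iff_le.1 ?_
  calc
    #s • c ≤ ∑ a ∈ s, ∑ b ∈ t, w a b := card_nsmul_le_sum _ _ _ hs
    _ = ∑ b ∈ t, ∑ a ∈ s, w a b := sum_comm
    _ ≤ #t • c := sum_le_card_nsmul _ _ _ ht

/-- A vertex cover of the acceptability graph of `sat`. Loops `Adj sat v v` are allowed, so this is
phrased with `Adj` rather than through `SimpleGraph`. -/
def IsVertexCover (sat : V → V → ℚ) (C : Finset V) : Prop :=
  ∀ ⦃u v⦄, Adj sat u v → u ∈ C ∨ v ∈ C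

section Matching

variable [Fintype V] {sat : V → V → ℚ} {M : V → V → ℝ} {C : Finset V}

/-- The set of fully matched agents, whose cardinality is `nfully M`. -/
noncomputable def fullyMatched (M : V → V → ℝ) : Finset V :=
  univ.filter fun v => ∑ u, M v u = 1

lemma mem_fullyMatched {v : V} : v ∈ fullyMatched M ↔ ∑ u, M v u = 1 := by
  simp [fullyMatched]

lemma IsMatching.wge_le_sum (hM : IsMatching sat M) (x y : V) : wge sat M x y ≤ ∑ z, M x z :=
  sum_le_univ_sum_of_nonneg (hM.nonneg x)

lemma IsMatching.wge_lt_one (hM : IsMatching sat M) {x : V} (hx : x ∉ fullyMatched M) (y : V) :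
    wge sat M x y < 1 :=
  (hM.wge_le_sum x y).trans_lt <|
    (hM.degree_le_one x).lt_of_ne fun h => hx (mem_fullyMatched.2 h)

lemma OrdStable.isVertexCover_fullyMatched (hOS : OrdStable sat M) (hM : IsMatching sat M) :
    IsVertexCover sat (fullyMatched M) := by
  intro u v huv
  by_contra! h
  exact hOS u v huv ⟨hM.wge_lt_one h.1 v, hM.wge_lt_one h.2 u⟩

lemma IsVertexCover.sum_eq_sum_univ (hC : IsVertexCover sat C) (hM : IsMatching sat M) {v : V}
    (hv : v ∉ C) : ∑ u ∈ C, M v u = ∑ u, M v u :=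
  sum_subset (subset_univ C) fun u _ hu => hM.support v u fun huv => (hC huv).elim hv hu

lemma IsVertexCover.card_fullyMatched_sdiff_le (hC : IsVertexCover sat C)
    (hM : IsMatching sat M) : #(fullyMatched M \ C) ≤ #C := by
  refine card_le_card_of_le_sum_of_sum_le (w := M) zero_lt_one (fun v hv => ?_) fun u _ => ?_
  · obtain ⟨hv_full, hvC⟩ := mem_sdiff.1 hv
    rw [hC.sum_eq_sum_univ hM hvC, mem_fullyMatched.1 hv_full]
  · calc
      ∑ v ∈ fullyMatched M \ C, M v u = ∑ v ∈ fullyMatched M \ C, M u v :=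
        sum_congr rfl fun v _ => hM.symm v u
      _ ≤ ∑ v, M u v := sum_le_univ_sum_of_nonneg (hM.nonneg u)
      _ ≤ 1 := hM.degree_le_one u

lemma IsVertexCover.nfully_le_two_mul_card (hC : IsVertexCover sat C) (hM : IsMatching sat M) :
    nfully M ≤ 2 * #C :=
  calc
    nfully M = #(fullyMatched M \ C) + #(fullyMatched M ∩ C) :=
      (card_sdiff_add_card_inter (fullyMatched M) C).symm
    _ ≤ #C + #C :=
      add_le_add (hC.card_fullyMatched_sdiff_le hM) (card_le_card inter_subset_right)
    _ = 2 * #C := (two_mul _).symm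

end Matching

theorem two_approximation_of_fully_matched_general [Fintype V]
    (sat : V → V → ℚ) (M' : V → V → ℝ) (hM' : IsMatching sat M') (hOS' : OrdStable sat M')
    (M : V → V → ℝ) (hM : IsMatching sat M) :
    nfully M ≤ 2 * nfully M' :=
  (hOS'.isVertexCover_fullyMatched hM').nfully_le_two_mul_card hM

/-- if `M'` is an ordinally stable fractional matching in which every
matched agent is fully matched, then any fractional matching `M` fully matches at most
twice as many agents as `M'` does. -/
theorem two_approximation_of_fully_matched [Fintype V]
    (sat : V → V → ℚ) (hinst : IsInstance sat)
    (M' : V → V → ℝ) (hM' : IsMatching sat M') (hOS' : OrdStable sat M')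
    (hfull' : ∀ v, 0 < ∑ u, M' v u → ∑ u, M' v u = 1)
    (M : V → V → ℝ) (hM : IsMatching sat M) :
    nfully M ≤ 2 * nfully M' :=
  two_approximation_of_fully_matched_general sat M' hM' hOS' M hM
end

section
/- Let G = (V, E) be a graph with V = {v₁, …, v_n}, E = {e₁, …, e_m}, and assume 0.2·m² − 11.1 > n. Let G_E be the edge-gadget graph for G (with any nonnegative values sat(u_i, e_j^i) ≤ 5m on the cross edges) and let M be a cardinally stable fractional matching of G_E. Then the total welfare ω := Σ_z U_M(z), summed over all agents z ∈ {e_j, f_j, g_j, h_j, e_j^i, e_j^{i'} : j ∈ [m]} of the edge gadgets, satisfies ω ≤ 3m(2m² + 9). Moreover, if there exists an edge e_j = {v_i, v_{i'}} ∈ E such that U_M(u_i) < sat(u_i, e_j^i) and U_M(u_{i'}) < sat(u_{i'}, e_j^{i'}), then ω < 3m(2m² + 9) − n. -/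
/-!
On each of the eight inner edges of a gadget the two satisfactions sum to `2m² + 9`, so a gadget
with total inner weight `w` and weights `x`, `y` on the edges from `e_j^i`, `e_j^{i'}` to `u_i`,
`u_{i'}` has welfare `(2m² + 9) w + 5x + 7y`. The agents `h_j`, `e_j^i`, `e_j^{i'}` cover all these
edges, hence `w + x + y ≤ 3` and the welfare is at most `3(2m² + 9) - (2m² + 2)(3 - w)`.

If `u_i` and `u_{i'}` both fall short, then stability forces `U(e_j^i) ≥ 5` and `U(e_j^{i'}) ≥ 7`.
If neither agent uses its edges to `g_j` and to the vertex agents, this takes weight `1/2` on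
`{e_j, e_j^i}` and `3/5` on `{e_j, e_j^{i'}}`, exceeding the capacity of `e_j` by `1/10`. Using
those other edges costs more inner weight than it saves, so that `w ≤ 3 - 1/10` in all cases.
-/

open Finset
open scoped Classical

variable {V : Type*}

/-- The agents of the edge-gadget graph `G_E`: for each edge `e_j` of `G` (with lower
endpoint `lo j` and higher endpoint `hi j`) there are six agents
`inl (j, 0) = e_j`, `inl (j, 1) = f_j`, `inl (j, 2) = g_j`, `inl (j, 3) = h_j`,
`inl (j, 4) = e_j^i` and `inl (j, 5) = e_j^{i'}`, and for each vertex `v_i` of `G`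
there is an agent `inr i = u_i`. -/
abbrev GV (n m : ℕ) := (Fin m × Fin 6) ⊕ Fin n

/-- The satisfaction function of the edge-gadget graph `G_E`, where `s i j` is the
(arbitrary, nonnegative, bounded by `5m`) value `sat(u_i, e_j^i)`. -/
def gadgetSat (n m : ℕ) (lo hi : Fin m → Fin n) (s : Fin n → Fin m → ℚ) :
    GV n m → GV n m → ℚ := fun a b =>
  match a, b with
  | Sum.inl (j, c), Sum.inl (j', c') =>
    if j = j' then
      if c = 0 ∧ c' = 3 then 2 * (m : ℚ) ^ 2 + 8        -- sat(e_j, h_j)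
      else if c = 3 ∧ c' = 0 then 1                     -- sat(h_j, e_j)
      else if c = 0 ∧ c' = 4 then 2 * (m : ℚ) ^ 2 + 2   -- sat(e_j, e_j^i)
      else if c = 4 ∧ c' = 0 then 7                     -- sat(e_j^i, e_j)
      else if c = 0 ∧ c' = 5 then 2 * (m : ℚ) ^ 2       -- sat(e_j, e_j^{i'})
      else if c = 5 ∧ c' = 0 then 9                     -- sat(e_j^{i'}, e_j)
      else if c = 2 ∧ c' = 4 then 2 * (m : ℚ) ^ 2 + 7   -- sat(g_j, e_j^i)
      else if c = 4 ∧ c' = 2 then 2                     -- sat(e_j^i, g_j)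
      else if c = 2 ∧ c' = 3 then 2 * (m : ℚ) ^ 2 + 5   -- sat(g_j, h_j)
      else if c = 3 ∧ c' = 2 then 4                     -- sat(h_j, g_j)
      else if c = 2 ∧ c' = 5 then 2 * (m : ℚ) ^ 2 + 4   -- sat(g_j, e_j^{i'})
      else if c = 5 ∧ c' = 2 then 5                     -- sat(e_j^{i'}, g_j)
      else if c = 1 ∧ c' = 4 then 2 * (m : ℚ) ^ 2 + 6   -- sat(f_j, e_j^i)
      else if c = 4 ∧ c' = 1 then 3                     -- sat(e_j^i, f_j)
      else if c = 1 ∧ c' = 5 then 2 * (m : ℚ) ^ 2 + 5   -- sat(f_j, e_j^{i'})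
      else if c = 5 ∧ c' = 1 then 4                     -- sat(e_j^{i'}, f_j)
      else 0
    else 0
  | Sum.inl (j, c), Sum.inr i =>
    if c = 4 ∧ i = lo j then 5                              -- sat(e_j^i, u_i)
    else if c = 5 ∧ i = hi j then 7                         -- sat(e_j^{i'}, u_{i'})
    else 0
  | Sum.inr i, Sum.inl (j, c) =>
    if c = 4 ∧ i = lo j then s i j                          -- sat(u_i, e_j^i)
    else if c = 5 ∧ i = hi j then s i j                     -- sat(u_{i'}, e_j^{i'})
    else 0
  | Sum.inr _, Sum.inr _ => 0

lemma sum_le_card_nsmul_sub_of_le_sub {ι α : Type*} [Fintype ι] [AddCommGroup α] [PartialOrder α]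
    [IsOrderedAddMonoid α] {f : ι → α} {B D : α} {i : ι}
    (hB : ∀ k, f k ≤ B) (hi : f i ≤ B - D) : ∑ k, f k ≤ Fintype.card ι • B - D := by
  have hcap : ∀ k, f k ≤ B - if k = i then D else 0 := by
    intro k
    split_ifs with hk
    · exact hk ▸ hi
    · simpa only [sub_zero] using hB k
  calc ∑ k, f k ≤ ∑ k, (B - if k = i then D else 0) := sum_le_sum fun k _ => hcap k
    _ = Fintype.card ι • B - D := by simp

lemma IsMatching.sum_le_one [Fintype V] {sat : V → V → ℚ} {M : V → V → ℝ}
    (hM : IsMatching sat M) (v : V) (S : Finset V) : ∑ u ∈ S, M v u ≤ 1 :=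
  (sum_le_univ_sum_of_nonneg (hM.nonneg v)).trans (hM.degree_le_one v)

lemma CardStable.le_util_of_util_lt [Fintype V] {sat : V → V → ℚ} {M : V → V → ℝ}
    (hCS : CardStable sat M) {u v : V} (huv : Adj sat u v) (hv : util sat M v < sat v u) :
    sat u v ≤ util sat M u :=
  not_lt.1 fun hu => hCS u v huv ⟨hu, hv⟩

namespace EdgeGadget

section Agents

variable {n m : ℕ}

/-- The agent `e_j`. -/
abbrev agentE (j : Fin m) : GV n m := Sum.inl (j, 0)

/-- The agent `f_j`. -/
abbrev agentF (j : Fin m) : GV n m := Sum.inl (j, 1)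

/-- The agent `g_j`. -/
abbrev agentG (j : Fin m) : GV n m := Sum.inl (j, 2)

/-- The agent `h_j`. -/
abbrev agentH (j : Fin m) : GV n m := Sum.inl (j, 3)

/-- The agent `e_j^i` attached to the lower endpoint of `e_j`. -/
abbrev agentLo (j : Fin m) : GV n m := Sum.inl (j, 4)

/-- The agent `e_j^{i'}` attached to the higher endpoint of `e_j`. -/
abbrev agentHi (j : Fin m) : GV n m := Sum.inl (j, 5)

/-- The agent `u_i`. -/
abbrev agentU (i : Fin n) : GV n m := Sum.inr i

/-- The total weight that `M` puts on the eight edges between two agents of gadget `j`. -/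
def innerWeight (M : GV n m → GV n m → ℝ) (j : Fin m) : ℝ :=
  (M (agentE j) (agentH j) + M (agentE j) (agentLo j) + M (agentE j) (agentHi j))
  + (M (agentG j) (agentH j) + M (agentG j) (agentLo j) + M (agentG j) (agentHi j))
  + (M (agentF j) (agentLo j) + M (agentF j) (agentHi j))

/-- The total utility of the six agents of gadget `j`. -/
noncomputable def gadgetWelfare (sat : GV n m → GV n m → ℚ) (M : GV n m → GV n m → ℝ)
    (j : Fin m) : ℝ :=
  ∑ c : Fin 6, util sat M (Sum.inl (j, c))

lemma sum_gadgetWelfare (sat : GV n m → GV n m → ℚ) (M : GV n m → GV n m → ℝ) :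
    ∑ j, gadgetWelfare sat M j = ∑ a : Fin m × Fin 6, util sat M (Sum.inl a) := by
  simp only [gadgetWelfare, Fintype.sum_prod_type]

end Agents

section Utilities

variable {n m : ℕ} {lo hi : Fin m → Fin n} {s : Fin n → Fin m → ℚ} {M : GV n m → GV n m → ℝ}

lemma util_agentE (j : Fin m) : util (gadgetSat n m lo hi s) M (agentE j) =
    (2 * (m : ℝ) ^ 2 + 8) * M (agentE j) (agentH j)
    + (2 * (m : ℝ) ^ 2 + 2) * M (agentE j) (agentLo j)
    + 2 * (m : ℝ) ^ 2 * M (agentE j) (agentHi j) := by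
  simp [util, Fintype.sum_prod_type, Fin.sum_univ_six, gadgetSat,
    apply_ite (Rat.cast : ℚ → ℝ), ite_mul]

lemma util_agentF (j : Fin m) : util (gadgetSat n m lo hi s) M (agentF j) =
    (2 * (m : ℝ) ^ 2 + 6) * M (agentF j) (agentLo j)
    + (2 * (m : ℝ) ^ 2 + 5) * M (agentF j) (agentHi j) := by
  simp [util, Fintype.sum_prod_type, Fin.sum_univ_six, gadgetSat,
    apply_ite (Rat.cast : ℚ → ℝ), ite_mul]

lemma util_agentG (j : Fin m) : util (gadgetSat n m lo hi s) M (agentG j) =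
    (2 * (m : ℝ) ^ 2 + 5) * M (agentG j) (agentH j)
    + (2 * (m : ℝ) ^ 2 + 7) * M (agentG j) (agentLo j)
    + (2 * (m : ℝ) ^ 2 + 4) * M (agentG j) (agentHi j) := by
  simp [util, Fintype.sum_prod_type, Fin.sum_univ_six, gadgetSat,
    apply_ite (Rat.cast : ℚ → ℝ), ite_mul]

lemma util_agentH (hM : IsMatching (gadgetSat n m lo hi s) M) (j : Fin m) :
    util (gadgetSat n m lo hi s) M (agentH j) =
      M (agentE j) (agentH j) + 4 * M (agentG j) (agentH j) := by
  rw [hM.symm (agentE j), hM.symm (agentG j)]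
  simp [util, Fintype.sum_prod_type, Fin.sum_univ_six, gadgetSat,
    apply_ite (Rat.cast : ℚ → ℝ), ite_mul]

lemma util_agentLo (hM : IsMatching (gadgetSat n m lo hi s) M) (j : Fin m) :
    util (gadgetSat n m lo hi s) M (agentLo j) =
      7 * M (agentE j) (agentLo j) + 3 * M (agentF j) (agentLo j)
      + 2 * M (agentG j) (agentLo j) + 5 * M (agentLo j) (agentU (lo j)) := by
  rw [hM.symm (agentE j), hM.symm (agentF j), hM.symm (agentG j)]
  simp [util, Fintype.sum_prod_type, Fin.sum_univ_six, gadgetSat,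
    apply_ite (Rat.cast : ℚ → ℝ), ite_mul]

lemma util_agentHi (hM : IsMatching (gadgetSat n m lo hi s) M) (j : Fin m) :
    util (gadgetSat n m lo hi s) M (agentHi j) =
      9 * M (agentE j) (agentHi j) + 4 * M (agentF j) (agentHi j)
      + 5 * M (agentG j) (agentHi j) + 7 * M (agentHi j) (agentU (hi j)) := by
  rw [hM.symm (agentE j), hM.symm (agentF j), hM.symm (agentG j)]
  simp [util, Fintype.sum_prod_type, Fin.sum_univ_six, gadgetSat,
    apply_ite (Rat.cast : ℚ → ℝ), ite_mul]

lemma gadgetWelfare_eq (hM : IsMatching (gadgetSat n m lo hi s) M) (j : Fin m) :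
    gadgetWelfare (gadgetSat n m lo hi s) M j =
      (2 * (m : ℝ) ^ 2 + 9) * innerWeight M j
      + 5 * M (agentLo j) (agentU (lo j)) + 7 * M (agentHi j) (agentU (hi j)) := by
  rw [gadgetWelfare, Fin.sum_univ_six, util_agentE, util_agentF, util_agentG, util_agentH hM,
    util_agentLo hM, util_agentHi hM, innerWeight]
  ring

end Utilities

section Degrees

variable {n m : ℕ} {sat : GV n m → GV n m → ℚ} {M : GV n m → GV n m → ℝ}

lemma degree_agentE_le_one (hM : IsMatching sat M) (j : Fin m) :
    M (agentE j) (agentH j) + M (agentE j) (agentLo j) + M (agentE j) (agentHi j) ≤ 1 := by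
  simpa [add_assoc] using hM.sum_le_one (agentE j) {agentH j, agentLo j, agentHi j}

lemma degree_agentG_le_one (hM : IsMatching sat M) (j : Fin m) :
    M (agentG j) (agentH j) + M (agentG j) (agentLo j) + M (agentG j) (agentHi j) ≤ 1 := by
  simpa [add_assoc] using hM.sum_le_one (agentG j) {agentH j, agentLo j, agentHi j}

lemma degree_agentH_le_one (hM : IsMatching sat M) (j : Fin m) :
    M (agentE j) (agentH j) + M (agentG j) (agentH j) ≤ 1 := by
  rw [hM.symm (agentE j), hM.symm (agentG j)]
  simpa using hM.sum_le_one (agentH j) {agentE j, agentG j}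

lemma degree_agentLo_le_one (hM : IsMatching sat M) (j : Fin m) (i : Fin n) :
    M (agentE j) (agentLo j) + M (agentF j) (agentLo j) + M (agentG j) (agentLo j)
      + M (agentLo j) (agentU i) ≤ 1 := by
  rw [hM.symm (agentE j), hM.symm (agentF j), hM.symm (agentG j)]
  simpa [add_assoc] using hM.sum_le_one (agentLo j) {agentE j, agentF j, agentG j, agentU i}

lemma degree_agentHi_le_one (hM : IsMatching sat M) (j : Fin m) (i : Fin n) :
    M (agentE j) (agentHi j) + M (agentF j) (agentHi j) + M (agentG j) (agentHi j)
      + M (agentHi j) (agentU i) ≤ 1 := by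
  rw [hM.symm (agentE j), hM.symm (agentF j), hM.symm (agentG j)]
  simpa [add_assoc] using hM.sum_le_one (agentHi j) {agentE j, agentF j, agentG j, agentU i}

lemma innerWeight_add_cross_le_three (hM : IsMatching sat M) (j : Fin m) (i i' : Fin n) :
    innerWeight M j + M (agentLo j) (agentU i) + M (agentHi j) (agentU i') ≤ 3 := by
  rw [innerWeight]
  linarith [degree_agentH_le_one hM j, degree_agentLo_le_one hM j i,
    degree_agentHi_le_one hM j i']

end Degrees

section Welfare

variable {n m : ℕ} {lo hi : Fin m → Fin n} {s : Fin n → Fin m → ℚ} {M : GV n m → GV n m → ℝ}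

lemma gadgetWelfare_le_sub (hM : IsMatching (gadgetSat n m lo hi s) M) (j : Fin m) :
    gadgetWelfare (gadgetSat n m lo hi s) M j ≤
      3 * (2 * (m : ℝ) ^ 2 + 9) - (2 * (m : ℝ) ^ 2 + 2) * (3 - innerWeight M j) := by
  rw [gadgetWelfare_eq hM]
  linarith [innerWeight_add_cross_le_three hM j (lo j) (hi j),
    hM.nonneg (agentLo j) (agentU (lo j))]

lemma gadgetWelfare_le (hM : IsMatching (gadgetSat n m lo hi s) M) (j : Fin m) :
    gadgetWelfare (gadgetSat n m lo hi s) M j ≤ 3 * (2 * (m : ℝ) ^ 2 + 9) := by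
  have hw : innerWeight M j ≤ 3 := by
    linarith [innerWeight_add_cross_le_three hM j (lo j) (hi j),
      hM.nonneg (agentLo j) (agentU (lo j)), hM.nonneg (agentHi j) (agentU (hi j))]
  have hdeficit : 0 ≤ (2 * (m : ℝ) ^ 2 + 2) * (3 - innerWeight M j) :=
    mul_nonneg (by positivity) (sub_nonneg.2 hw)
  linarith [gadgetWelfare_le_sub hM j]

lemma le_weight_agentE_agentLo (hM : IsMatching (gadgetSat n m lo hi s) M) {j : Fin m}
    (hLo : 5 ≤ util (gadgetSat n m lo hi s) M (agentLo j)) :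
    (2 + M (agentG j) (agentLo j) - 2 * M (agentLo j) (agentU (lo j))) / 4
      ≤ M (agentE j) (agentLo j) := by
  rw [util_agentLo hM] at hLo
  linarith [degree_agentLo_le_one hM j (lo j)]

lemma le_weight_agentE_agentHi (hM : IsMatching (gadgetSat n m lo hi s) M) {j : Fin m}
    (hHi : 7 ≤ util (gadgetSat n m lo hi s) M (agentHi j)) :
    (3 - M (agentG j) (agentHi j) - 3 * M (agentHi j) (agentU (hi j))) / 5
      ≤ M (agentE j) (agentHi j) := by
  rw [util_agentHi hM] at hHi
  linarith [degree_agentHi_le_one hM j (hi j)]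

lemma innerWeight_le_of_le_util (hM : IsMatching (gadgetSat n m lo hi s) M) {j : Fin m}
    (hLo : 5 ≤ util (gadgetSat n m lo hi s) M (agentLo j))
    (hHi : 7 ≤ util (gadgetSat n m lo hi s) M (agentHi j)) :
    innerWeight M j ≤ 3 - 1 / 10 := by
  set gLo := M (agentG j) (agentLo j)
  set gHi := M (agentG j) (agentHi j)
  set x := M (agentLo j) (agentU (lo j))
  set y := M (agentHi j) (agentU (hi j))
  have hgLo : 0 ≤ gLo := hM.nonneg _ _
  have hgHi : 0 ≤ gHi := hM.nonneg _ _
  have hx : 0 ≤ x := hM.nonneg _ _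
  have hy : 0 ≤ y := hM.nonneg _ _
  calc innerWeight M j
      ≤ 1 + 1 + (M (agentF j) (agentLo j) + M (agentF j) (agentHi j)) :=
        add_le_add_left (add_le_add (degree_agentE_le_one hM j) (degree_agentG_le_one hM j)) _
    _ ≤ 4 - M (agentE j) (agentLo j) - M (agentE j) (agentHi j) - gLo - gHi - x - y := by
        linarith [degree_agentLo_le_one hM j (lo j), degree_agentHi_le_one hM j (hi j)]
    _ ≤ 4 - (2 + gLo - 2 * x) / 4 - (3 - gHi - 3 * y) / 5 - gLo - gHi - x - y := by
        linarith [le_weight_agentE_agentLo hM hLo, le_weight_agentE_agentHi hM hHi]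
    _ ≤ 3 - 1 / 10 := by linarith

lemma gadgetWelfare_le_of_util_lt (hM : IsMatching (gadgetSat n m lo hi s) M)
    (hCS : CardStable (gadgetSat n m lo hi s) M) {j : Fin m}
    (hlo : util (gadgetSat n m lo hi s) M (agentU (lo j)) < (s (lo j) j : ℝ))
    (hhi : util (gadgetSat n m lo hi s) M (agentU (hi j)) < (s (hi j) j : ℝ)) :
    gadgetWelfare (gadgetSat n m lo hi s) M j ≤
      3 * (2 * (m : ℝ) ^ 2 + 9) - ((m : ℝ) ^ 2 + 1) / 5 := by
  have hLo : 5 ≤ util (gadgetSat n m lo hi s) M (agentLo j) := by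
    simpa [gadgetSat] using hCS.le_util_of_util_lt (u := agentLo j) (v := agentU (lo j))
      (Or.inl (by simp [gadgetSat])) (by simpa [gadgetSat] using hlo)
  have hHi : 7 ≤ util (gadgetSat n m lo hi s) M (agentHi j) := by
    simpa [gadgetSat] using hCS.le_util_of_util_lt (u := agentHi j) (v := agentU (hi j))
      (Or.inl (by simp [gadgetSat])) (by simpa [gadgetSat] using hhi)
  have hmissing : 1 / 10 ≤ 3 - innerWeight M j := by
    linarith [innerWeight_le_of_le_util hM hLo hHi]
  calc gadgetWelfare (gadgetSat n m lo hi s) M j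
      ≤ 3 * (2 * (m : ℝ) ^ 2 + 9) - (2 * (m : ℝ) ^ 2 + 2) * (3 - innerWeight M j) :=
        gadgetWelfare_le_sub hM j
    _ ≤ 3 * (2 * (m : ℝ) ^ 2 + 9) - (2 * (m : ℝ) ^ 2 + 2) * (1 / 10) := by gcongr
    _ = 3 * (2 * (m : ℝ) ^ 2 + 9) - ((m : ℝ) ^ 2 + 1) / 5 := by ring

end Welfare

end EdgeGadget

open EdgeGadget in
theorem edgeGadget_welfare_bound_general
    {n m : ℕ} {lo hi : Fin m → Fin n} {s : Fin n → Fin m → ℚ} {M : GV n m → GV n m → ℝ}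
    (hM : IsMatching (gadgetSat n m lo hi s) M) :
    (∑ a : Fin m × Fin 6, util (gadgetSat n m lo hi s) M (Sum.inl a))
        ≤ 3 * (m : ℝ) * (2 * (m : ℝ) ^ 2 + 9) ∧
    (CardStable (gadgetSat n m lo hi s) M →
      (∃ j : Fin m,
        util (gadgetSat n m lo hi s) M (Sum.inr (lo j)) < ((s (lo j) j : ℚ) : ℝ) ∧
        util (gadgetSat n m lo hi s) M (Sum.inr (hi j)) < ((s (hi j) j : ℚ) : ℝ)) →
      (∑ a : Fin m × Fin 6, util (gadgetSat n m lo hi s) M (Sum.inl a))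
        ≤ 3 * (m : ℝ) * (2 * (m : ℝ) ^ 2 + 9) - ((m : ℝ) ^ 2 + 1) / 5) := by
  have hcard : Fintype.card (Fin m) • (3 * (2 * (m : ℝ) ^ 2 + 9)) =
      3 * (m : ℝ) * (2 * (m : ℝ) ^ 2 + 9) := by
    rw [Fintype.card_fin, nsmul_eq_mul]
    ring
  rw [← sum_gadgetWelfare, ← hcard]
  constructor
  · exact sum_le_card_nsmul univ _ _ fun j _ => gadgetWelfare_le hM j
  · rintro hCS ⟨j, hlo, hhi⟩
    exact sum_le_card_nsmul_sub_of_le_sub (gadgetWelfare_le hM)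
      (gadgetWelfare_le_of_util_lt hM hCS hlo hhi)

/-- the total welfare received by the agents of the edge gadgets under a
cardinally stable fractional matching is at most `3m(2m² + 9)`; and it is strictly less
than `3m(2m² + 9) − n` as soon as some edge `e_j = {v_i, v_{i'}}` of `G` has
`U_M(u_i) < sat(u_i, e_j^i)` and `U_M(u_{i'}) < sat(u_{i'}, e_j^{i'})`. -/
theorem edgeGadget_welfare_bound
    (n m : ℕ) (lo hi : Fin m → Fin n)
    (hlh : ∀ j, lo j < hi j)
    (hinj : Function.Injective (fun j => (lo j, hi j)))
    (hbig : (n : ℚ) < (2 / 10) * (m : ℚ) ^ 2 - 111 / 10)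
    (s : Fin n → Fin m → ℚ)
    (hs0 : ∀ i j, 0 ≤ s i j) (hs5 : ∀ i j, s i j ≤ 5 * m)
    (M : GV n m → GV n m → ℝ)
    (hM : IsMatching (gadgetSat n m lo hi s) M)
    (hCS : CardStable (gadgetSat n m lo hi s) M) :
    (∑ a : Fin m × Fin 6, util (gadgetSat n m lo hi s) M (Sum.inl a))
        ≤ 3 * (m : ℝ) * (2 * (m : ℝ) ^ 2 + 9) ∧
    ((∃ j : Fin m,
        util (gadgetSat n m lo hi s) M (Sum.inr (lo j)) < ((s (lo j) j : ℚ) : ℝ) ∧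
        util (gadgetSat n m lo hi s) M (Sum.inr (hi j)) < ((s (hi j) j : ℚ) : ℝ)) →
      (∑ a : Fin m × Fin 6, util (gadgetSat n m lo hi s) M (Sum.inl a))
        < 3 * (m : ℝ) * (2 * (m : ℝ) ^ 2 + 9) - n) := by
  refine ⟨(edgeGadget_welfare_bound_general hM).1, fun hunsat =>
    ((edgeGadget_welfare_bound_general hM).2 hCS hunsat).trans_lt ?_⟩
  have hn : (n : ℝ) < 2 / 10 * (m : ℝ) ^ 2 - 111 / 10 := by
    simpa using (Rat.cast_lt (K := ℝ)).2 hbig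
  linarith
end
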